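/- arXiv:1905.01028 — 2 statements merged into one kernel-verified Lean document; each statement's English description precedes it below -/
import Mathlib

section
/- Let G be a connected undirected graph on n vertices with Laplacian matrix L, and let κ_p, κ_v, c_p, c_v ∈ ℝ^{3×3} be positive definite diagonal matrices. Let ê_p, ê_v : [0,∞) → ℝ^{3n} be differentiable with ê_p'(t) = ê_v(t) and ê_v'(t) = -(I_n ⊗ κ_p + L ⊗ c_p) ê_p(t) - (I_n ⊗ κ_v + L ⊗ c_v) ê_v(t). Define the Lyapunov function V(t) = ½ ê_p(t)ᵀ (I_n ⊗ κ_p + L ⊗ c_p) ê_p(t) + ½ ê_v(t)ᵀ ê_v(t). Then V is differentiable and V'(t) = - ê_v(t)ᵀ (I_n ⊗ κ_v + L ⊗ c_v) ê_v(t) ≤ 0 for all t ≥ 0. -/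
/-!
The damping and stiffness matrices `I ⊗ κ + L ⊗ c` are positive semidefinite, being sums of
Kronecker products of positive semidefinite matrices (`posSemidef_gain`). Since the stiffness matrix
`P` is symmetric, the product rule gives `V' = ê_v ⬝ P ê_p + ê_v ⬝ ê_v'`; inserting the dynamics, the
`P` terms cancel and only the damping term `-ê_v ⬝ Q ê_v` is left, which is nonpositive because `Q`
is positive semidefinite.
-/

open Matrix Kronecker

theorem posSemidef_gain {n : ℕ} (G : SimpleGraph (Fin n)) [DecidableRel G.Adj]
    {κ c : Fin 3 → ℝ} (hκ : ∀ i, 0 < κ i) (hc : ∀ i, 0 < c i) :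
    ((1 : Matrix (Fin n) (Fin n) ℝ) ⊗ₖ Matrix.diagonal κ
      + G.lapMatrix ℝ ⊗ₖ Matrix.diagonal c).PosSemidef :=
  (PosSemidef.one.kronecker (PosSemidef.diagonal fun i => (hκ i).le)).add
    ((G.posSemidef_lapMatrix ℝ).kronecker (PosSemidef.diagonal fun i => (hc i).le))

theorem hasDerivAt_dotProduct {ι : Type*} [Fintype ι] {f g : ℝ → ι → ℝ} {f' g' : ι → ℝ} {t : ℝ}
    (hf : HasDerivAt f f' t) (hg : HasDerivAt g g' t) :
    HasDerivAt (fun s => f s ⬝ᵥ g s) (f' ⬝ᵥ g t + f t ⬝ᵥ g') t := by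
  simp only [dotProduct, ← Finset.sum_add_distrib]
  exact HasDerivAt.fun_sum fun i _ => (hasDerivAt_pi.1 hf i).mul (hasDerivAt_pi.1 hg i)

theorem hasDerivAt_mulVec {ι : Type*} [Fintype ι] (M : Matrix ι ι ℝ) {f : ℝ → ι → ℝ}
    {f' : ι → ℝ} {t : ℝ} (hf : HasDerivAt f f' t) :
    HasDerivAt (fun s => M *ᵥ f s) (M *ᵥ f') t := by
  refine hasDerivAt_pi.2 fun i => ?_
  simpa [mulVec] using hasDerivAt_dotProduct (hasDerivAt_const t (M i)) hf

/-- The energy balance for `x'' = -P x - Q x'` with symmetric `P`. -/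
theorem hasDerivAt_energy {ι : Type*} [Fintype ι] {P Q : Matrix ι ι ℝ} (hP : P.IsHermitian)
    {x v : ℝ → ι → ℝ} {t : ℝ} (hx : HasDerivAt x (v t) t)
    (hv : HasDerivAt v (-(P *ᵥ x t) - Q *ᵥ v t) t) :
    HasDerivAt (fun s => (1/2) * (x s ⬝ᵥ P *ᵥ x s) + (1/2) * (v s ⬝ᵥ v s))
      (-(v t ⬝ᵥ Q *ᵥ v t)) t := by
  have h := ((hasDerivAt_dotProduct hx (hasDerivAt_mulVec P hx)).const_mul (1/2 : ℝ)).add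
    ((hasDerivAt_dotProduct hv hv).const_mul (1/2 : ℝ))
  refine h.congr_deriv ?_
  have hsymm : x t ⬝ᵥ P *ᵥ v t = v t ⬝ᵥ P *ᵥ x t := by
    rw [dotProduct_mulVec, ← mulVec_transpose, ← conjTranspose_eq_transpose_of_trivial,
      hP.eq, dotProduct_comm]
  rw [hsymm, dotProduct_comm _ (v t), dotProduct_sub, dotProduct_neg]
  ring

/-- Along the cooperative-filter error dynamics, the Lyapunov function
`V(t) = ½ ê_pᵀ (I_n ⊗ κ_p + L ⊗ c_p) ê_p + ½ ê_vᵀ ê_v` is differentiable with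
`V'(t) = - ê_vᵀ (I_n ⊗ κ_v + L ⊗ c_v) ê_v ≤ 0` for all `t ≥ 0`. -/
theorem coopFilter_lyapunov_derivative (n : ℕ) (G : SimpleGraph (Fin n))
    [DecidableRel G.Adj] (hG : G.Connected)
    (κp κv cp cv : Fin 3 → ℝ)
    (hκp : ∀ i, 0 < κp i) (hκv : ∀ i, 0 < κv i)
    (hcp : ∀ i, 0 < cp i) (hcv : ∀ i, 0 < cv i)
    (ep ev : ℝ → (Fin n × Fin 3) → ℝ)
    (hep : ∀ t ≥ (0:ℝ), HasDerivAt ep (ev t) t)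
    (hev : ∀ t ≥ (0:ℝ), HasDerivAt ev
      (-(((1 : Matrix (Fin n) (Fin n) ℝ) ⊗ₖ Matrix.diagonal κp
            + G.lapMatrix ℝ ⊗ₖ Matrix.diagonal cp).mulVec (ep t))
        - ((1 : Matrix (Fin n) (Fin n) ℝ) ⊗ₖ Matrix.diagonal κv
            + G.lapMatrix ℝ ⊗ₖ Matrix.diagonal cv).mulVec (ev t)) t) :
    ∀ t ≥ (0:ℝ),
      HasDerivAt (fun s =>
          (1/2) * (ep s ⬝ᵥ ((1 : Matrix (Fin n) (Fin n) ℝ) ⊗ₖ Matrix.diagonal κp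
              + G.lapMatrix ℝ ⊗ₖ Matrix.diagonal cp).mulVec (ep s))
          + (1/2) * (ev s ⬝ᵥ ev s))
        (-(ev t ⬝ᵥ ((1 : Matrix (Fin n) (Fin n) ℝ) ⊗ₖ Matrix.diagonal κv
              + G.lapMatrix ℝ ⊗ₖ Matrix.diagonal cv).mulVec (ev t))) t
      ∧ -(ev t ⬝ᵥ ((1 : Matrix (Fin n) (Fin n) ℝ) ⊗ₖ Matrix.diagonal κv
              + G.lapMatrix ℝ ⊗ₖ Matrix.diagonal cv).mulVec (ev t)) ≤ 0 := by
  intro t ht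
  refine ⟨hasDerivAt_energy (posSemidef_gain G hκp hcp).isHermitian (hep t ht) (hev t ht), ?_⟩
  simpa using (posSemidef_gain G hκv hcv).dotProduct_mulVec_nonneg (ev t)
end

section
/- Let A ∈ ℝ^{n×n} and let P ∈ ℝ^{n×n} be a symmetric positive definite matrix satisfying the Lyapunov equation P A + Aᵀ P = -I_n. Let t₀ ≥ 0, let w : [t₀,∞) → ℝⁿ be continuous with ‖w(t)‖₂ ≤ W for all t ≥ t₀, and let x : [t₀,∞) → ℝⁿ be differentiable with x'(t) = A x(t) + w(t) for all t ≥ t₀. Then for all t ≥ t₀: ‖x(t)‖₂ ≤ √(λ_max(P)/λ_min(P)) · e^{-(t-t₀)/(2 λ_max(P))} · ‖x(t₀)‖₂ + (1 - e^{-(t-t₀)/(2 λ_max(P))}) · (2 λ_max(P)² / λ_min(P)) · W, where λ_max(P) and λ_min(P) are the largest and smallest eigenvalues of P. -/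
/-!
The energy `V = xᵀ P x` satisfies `V' = -‖x‖² + 2 xᵀ P w`. Since `V ≤ λ_max ‖x‖²` and, by the
Cauchy–Schwarz inequality for the form `P`, `xᵀ P w ≤ √V √(wᵀ P w)`, the function `√V` formally
satisfies `(√V)' ≤ -√V / (2 λ_max) + K` with `K = λ_max W / √λ_min`, whose comparison solution is
`√V(t) ≤ e √V(t₀) + (1 - e) 2 λ_max K`, `e = exp (-(t - t₀) / (2 λ_max))`. Dividing by `√λ_min`
gives the bound.

As `√V` need not be differentiable at zeros of `V`, the comparison is made between `V` and `u²`,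
where `u > 0` solves the comparison equation with both the initial value and `K` increased by
`ε > 0` (`energy_le_comparison`); then `ε` tends to `0`.
-/

open Matrix

/-- The Euclidean (ℓ²) norm of a finitely-indexed real vector. -/
noncomputable def norm2 {ι : Type*} [Fintype ι] (v : ι → ℝ) : ℝ :=
  Real.sqrt (∑ i, v i ^ 2)

theorem norm2_nonneg {n : ℕ} (v : Fin n → ℝ) : 0 ≤ norm2 v := Real.sqrt_nonneg _

theorem norm2_sq {n : ℕ} (v : Fin n → ℝ) : norm2 v ^ 2 = v ⬝ᵥ v := by
  unfold norm2
  rw [Real.sq_sqrt (Finset.sum_nonneg fun i _ => sq_nonneg _)]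
  simp [dotProduct, sq]

open scoped MatrixOrder ComplexOrder in
theorem quadForm_bounds {n : ℕ} {P : Matrix (Fin n) (Fin n) ℝ} (hP : P.IsHermitian)
    {lmin lmax : ℝ} (hmin : ∀ i, lmin ≤ hP.eigenvalues i) (hmax : ∀ i, hP.eigenvalues i ≤ lmax)
    (v : Fin n → ℝ) :
    lmin * (v ⬝ᵥ v) ≤ v ⬝ᵥ P *ᵥ v ∧ v ⬝ᵥ P *ᵥ v ≤ lmax * (v ⬝ᵥ v) := by
  have hsa : IsSelfAdjoint P := hP
  constructor
  · have h : algebraMap ℝ _ lmin ≤ P := by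
      rw [algebraMap_le_iff_le_spectrum, hP.spectrum_real_eq_range_eigenvalues]
      rintro _ ⟨i, rfl⟩
      exact hmin i
    have := (Matrix.le_iff.1 h).dotProduct_mulVec_nonneg v
    simpa [Algebra.algebraMap_eq_smul_one, sub_mulVec, smul_mulVec, dotProduct_sub] using this
  · have h : P ≤ algebraMap ℝ _ lmax := by
      rw [le_algebraMap_iff_spectrum_le, hP.spectrum_real_eq_range_eigenvalues]
      rintro _ ⟨i, rfl⟩
      exact hmax i
    have := (Matrix.le_iff.1 h).dotProduct_mulVec_nonneg v
    simpa [Algebra.algebraMap_eq_smul_one, sub_mulVec, smul_mulVec, dotProduct_sub] using this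

theorem bilin_symm {n : ℕ} {P : Matrix (Fin n) (Fin n) ℝ} (hP : P.IsHermitian)
    (v z : Fin n → ℝ) : z ⬝ᵥ P *ᵥ v = v ⬝ᵥ P *ᵥ z := by
  have hT : Pᵀ = P := by simpa [Matrix.IsSymm] using hP
  rw [dotProduct_mulVec, ← mulVec_transpose, hT, dotProduct_comm]

theorem hasDerivAt_quadForm {n : ℕ} {P : Matrix (Fin n) (Fin n) ℝ} (hP : P.IsHermitian)
    {x : ℝ → Fin n → ℝ} {x' : Fin n → ℝ} {t : ℝ} (hx : HasDerivAt x x' t) :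
    HasDerivAt (fun s => x s ⬝ᵥ P *ᵥ x s) (2 * (x t ⬝ᵥ P *ᵥ x')) t := by
  have hc := hasDerivAt_pi.1 hx
  have h : HasDerivAt (fun s => x s ⬝ᵥ P *ᵥ x s) (x' ⬝ᵥ P *ᵥ x t + x t ⬝ᵥ P *ᵥ x') t := by
    simp only [dotProduct, mulVec]
    rw [← Finset.sum_add_distrib]
    refine HasDerivAt.fun_sum fun i _ => (hc i).mul ?_
    exact HasDerivAt.fun_sum fun j _ => (hc j).const_mul (P i j)
  rw [bilin_symm hP] at h
  convert h using 1
  ring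

/-- The drift part of the derivative of the energy, evaluated by the Lyapunov equation. -/
theorem lyapunov_drift {n : ℕ} {A P : Matrix (Fin n) (Fin n) ℝ} (hP : P.IsHermitian)
    (hLyap : P * A + A.transpose * P = -1) (v : Fin n → ℝ) :
    2 * (v ⬝ᵥ P *ᵥ (A *ᵥ v)) = -(v ⬝ᵥ v) := by
  have h : v ⬝ᵥ (P * A + A.transpose * P) *ᵥ v = v ⬝ᵥ (-1 : Matrix (Fin n) (Fin n) ℝ) *ᵥ v := by
    rw [hLyap]
  rw [add_mulVec, dotProduct_add, ← mulVec_mulVec, ← mulVec_mulVec, neg_mulVec, one_mulVec,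
    dotProduct_neg] at h
  have h2 : v ⬝ᵥ Aᵀ *ᵥ (P *ᵥ v) = v ⬝ᵥ P *ᵥ (A *ᵥ v) := by
    rw [dotProduct_mulVec, vecMul_transpose, bilin_symm hP]
  linarith

/-- Cauchy–Schwarz for the form `P`, in the strict form used at a contact point `vᵀ P v = u²`. -/
theorem bilin_lt {n : ℕ} {P : Matrix (Fin n) (Fin n) ℝ} (hP : P.PosDef) {v z : Fin n → ℝ}
    {u K K' : ℝ} (hu : 0 < u) (hK : 0 ≤ K) (hKK : K < K') (hv : v ⬝ᵥ P *ᵥ v = u ^ 2)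
    (hz : z ⬝ᵥ P *ᵥ z ≤ K ^ 2) : v ⬝ᵥ P *ᵥ z < K' * u := by
  have h := hP.posSemidef.dotProduct_mulVec_nonneg (K' • v - u • z)
  simp only [star_trivial, mulVec_sub, mulVec_smul, dotProduct_sub, sub_dotProduct,
    smul_dotProduct, dotProduct_smul, smul_eq_mul] at h
  rw [bilin_symm hP.1 v z, hv] at h
  have hK' : 0 < K' := hK.trans_lt hKK
  have h1 : z ⬝ᵥ P *ᵥ z < K' ^ 2 := hz.trans_lt (by gcongr)
  have h2 : u ^ 2 * (z ⬝ᵥ P *ᵥ z) < u ^ 2 * K' ^ 2 := by gcongr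
  have h3 : (2 * u * K') * (v ⬝ᵥ P *ᵥ z) < (2 * u * K') * (K' * u) := by nlinarith
  exact lt_of_mul_lt_mul_left h3 (by positivity)

/-- Comparison of the energy with the square of a solution of `u' = -u / (2 l) + (K + ε)`,
`u t₀ = s + ε`. -/
theorem energy_le_comparison {n : ℕ} {A P : Matrix (Fin n) (Fin n) ℝ}
    (hP : P.PosDef) (hLyap : P * A + A.transpose * P = -1) {l : ℝ} (hl : 0 < l)
    (hmax : ∀ v : Fin n → ℝ, v ⬝ᵥ P *ᵥ v ≤ l * (v ⬝ᵥ v))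
    {t₀ K s ε : ℝ} (hK : 0 ≤ K) (hs : 0 ≤ s) (hε : 0 < ε) {w x : ℝ → Fin n → ℝ}
    (hw : ∀ t ≥ t₀, w t ⬝ᵥ P *ᵥ w t ≤ K ^ 2)
    (hx : ∀ t ≥ t₀, HasDerivAt x (A.mulVec (x t) + w t) t)
    (h0 : x t₀ ⬝ᵥ P *ᵥ x t₀ ≤ s ^ 2) {t : ℝ} (ht : t₀ ≤ t) :
    x t ⬝ᵥ P *ᵥ x t ≤ (Real.exp (-(t - t₀) / (2 * l)) * (s + ε)
      + (1 - Real.exp (-(t - t₀) / (2 * l))) * (2 * l * (K + ε))) ^ 2 := by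
  set u : ℝ → ℝ := fun r => Real.exp (-(r - t₀) / (2 * l)) * (s + ε)
      + (1 - Real.exp (-(r - t₀) / (2 * l))) * (2 * l * (K + ε)) with hu
  have hupos : ∀ r ≥ t₀, 0 < u r := by
    intro r hr
    have h1 : Real.exp (-(r - t₀) / (2 * l)) ≤ 1 := by
      rw [Real.exp_le_one_iff]
      exact div_nonpos_of_nonpos_of_nonneg (by linarith) (by positivity)
    have h2 : 0 ≤ 1 - Real.exp (-(r - t₀) / (2 * l)) := by linarith
    simp only [hu]
    positivity
  have huder : ∀ r, HasDerivAt u (-u r / (2 * l) + (K + ε)) r := by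
    intro r
    have he : HasDerivAt (fun r => Real.exp (-(r - t₀) / (2 * l)))
        (Real.exp (-(r - t₀) / (2 * l)) * (-1 / (2 * l))) r :=
      ((((hasDerivAt_id r).sub_const t₀).neg).div_const (2 * l)).exp
    refine ((he.mul_const (s + ε)).add
      ((he.const_sub 1).mul_const (2 * l * (K + ε)))).congr_deriv ?_
    simp only [hu]
    field_simp
    ring
  have hVder := fun r (hr : r ≥ t₀) => hasDerivAt_quadForm hP.1 (hx r hr)
  refine image_le_of_deriv_right_lt_deriv_boundary (a := t₀) (b := t)
    (f := fun r => x r ⬝ᵥ P *ᵥ x r) (B := fun r => u r ^ 2)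
    (fun r hr => (hVder r hr.1).continuousAt.continuousWithinAt)
    (fun r hr => (hVder r hr.1).hasDerivWithinAt) ?_ (fun r => (huder r).fun_pow 2) ?_
    (Set.right_mem_Icc.2 ht)
  · have : u t₀ = s + ε := by simp [hu]
    simp only [this]
    nlinarith
  · intro r hr heq
    have hc := bilin_lt hP (hupos r hr.1) hK (lt_add_of_pos_right K hε) heq (hw r hr.1)
    have hd := lyapunov_drift hP.1 hLyap (x r)
    have hm := hmax (x r)
    rw [heq] at hm
    have hm' : u r ^ 2 / l ≤ x r ⬝ᵥ x r := by rwa [div_le_iff₀' hl]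
    rw [mulVec_add, dotProduct_add]
    have e : (2 : ℕ) * u r ^ (2 - 1) * (-u r / (2 * l) + (K + ε))
        = -(u r ^ 2 / l) + 2 * ((K + ε) * u r) := by
      push_cast
      field_simp
    rw [e]
    linarith

/-- Let `P` be symmetric positive definite with `P A + Aᵀ P = -I`, let
`λ_min, λ_max` be the smallest and largest eigenvalues of `P`, and let `x' = A x + w` with
`‖w(t)‖₂ ≤ W` on `[t₀, ∞)`. Then for all `t ≥ t₀`,
`‖x(t)‖₂ ≤ √(λ_max/λ_min) e^{-(t-t₀)/(2 λ_max)} ‖x(t₀)‖₂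
           + (1 - e^{-(t-t₀)/(2 λ_max)}) (2 λ_max²/λ_min) W`. -/
theorem lyapunov_iss_bound (n : ℕ) (A P : Matrix (Fin n) (Fin n) ℝ)
    (hP : P.PosDef) (hLyap : P * A + A.transpose * P = -1)
    (lmin lmax : ℝ)
    (hmin : IsLeast (Set.range hP.1.eigenvalues) lmin)
    (hmax : IsGreatest (Set.range hP.1.eigenvalues) lmax)
    (t₀ : ℝ) (ht₀ : 0 ≤ t₀) (W : ℝ) (w x : ℝ → Fin n → ℝ)
    (hw_cont : ContinuousOn w (Set.Ici t₀))
    (hw : ∀ t ≥ t₀, norm2 (w t) ≤ W)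
    (hx : ∀ t ≥ t₀, HasDerivAt x (A.mulVec (x t) + w t) t) :
    ∀ t ≥ t₀, norm2 (x t) ≤
      Real.sqrt (lmax / lmin) * Real.exp (-(t - t₀) / (2 * lmax)) * norm2 (x t₀)
      + (1 - Real.exp (-(t - t₀) / (2 * lmax))) * (2 * lmax ^ 2 / lmin) * W := by
  have hb := quadForm_bounds hP.1 (fun i => hmin.2 ⟨i, rfl⟩) (fun i => hmax.2 ⟨i, rfl⟩)
  have hlmin : 0 < lmin := by
    obtain ⟨i, hi⟩ := hmin.1
    exact hi ▸ hP.eigenvalues_pos i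
  have hle : lmin ≤ lmax := hmin.2 hmax.1
  have hlmax : 0 < lmax := hlmin.trans_le hle
  have hW : 0 ≤ W := (norm2_nonneg _).trans (hw t₀ le_rfl)
  intro t ht
  set e := Real.exp (-(t - t₀) / (2 * lmax)) with he
  have he0 : 0 < e := Real.exp_pos _
  have he1 : e ≤ 1 := by
    rw [he, Real.exp_le_one_iff]
    exact div_nonpos_of_nonpos_of_nonneg (by linarith) (by positivity)
  set q := Real.sqrt lmin with hq
  have hq0 : 0 < q := Real.sqrt_pos.2 hlmin
  have hqq : q ^ 2 = lmin := Real.sq_sqrt hlmin.le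
  set p := Real.sqrt lmax with hp
  have hpp : p ^ 2 = lmax := Real.sq_sqrt hlmax.le
  have hp0 : 0 ≤ p := Real.sqrt_nonneg _
  have hwK : ∀ r ≥ t₀, w r ⬝ᵥ P *ᵥ w r ≤ (lmax * W / q) ^ 2 := by
    intro r hr
    have h1 : w r ⬝ᵥ w r ≤ W ^ 2 := by
      rw [← norm2_sq]
      have := norm2_nonneg (w r)
      have := hw r hr
      gcongr
    calc w r ⬝ᵥ P *ᵥ w r ≤ lmax * (w r ⬝ᵥ w r) := (hb _).2
      _ ≤ lmax * W ^ 2 := by gcongr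
      _ ≤ (lmax * W / q) ^ 2 := by
        rw [div_pow, hqq, le_div_iff₀ hlmin]
        have : lmax * W ^ 2 * lmin ≤ lmax * W ^ 2 * lmax := by gcongr
        linarith
  have h0 : x t₀ ⬝ᵥ P *ᵥ x t₀ ≤ (p * norm2 (x t₀)) ^ 2 := by
    rw [mul_pow, hpp, norm2_sq]
    exact (hb _).2
  have hn0 := norm2_nonneg (x t₀)
  have hK0 : 0 ≤ lmax * W / q := by positivity
  have key : q * norm2 (x t) ≤
      e * (p * norm2 (x t₀)) + (1 - e) * (2 * lmax * (lmax * W / q)) := by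
    refine le_of_forall_pos_le_add fun δ hδ => ?_
    -- the two `ε`-perturbations add `(e + (1 - e) * 2 * lmax) * ε` to the bound
    have hε : 0 < δ / (1 + 2 * lmax) := by positivity
    have hc := energy_le_comparison hP hLyap hlmax (fun v => (hb v).2) hK0
      (mul_nonneg hp0 hn0) hε hwK hx h0 ht
    rw [← he] at hc
    have h1 : (q * norm2 (x t)) ^ 2 ≤ x t ⬝ᵥ P *ᵥ x t := by
      rw [mul_pow, hqq, norm2_sq]
      exact (hb _).1
    have h1e : 0 ≤ 1 - e := by linarith
    have h2 := le_of_sq_le_sq (h1.trans hc) (by positivity)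
    have h3 : δ = δ / (1 + 2 * lmax) * (1 + 2 * lmax) := by field_simp
    have h4 : 0 ≤ δ / (1 + 2 * lmax) * ((1 - e) + 2 * lmax * e) := by positivity
    nlinarith
  have hfin : norm2 (x t) ≤
      (e * (p * norm2 (x t₀)) + (1 - e) * (2 * lmax * (lmax * W / q))) / q := by
    rwa [le_div_iff₀' hq0]
  refine hfin.trans_eq ?_
  rw [Real.sqrt_div hlmax.le, ← hq, ← hp, ← hqq]
  field_simp
end
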